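/- arXiv:2503.09093 — 6 statements merged into one kernel-verified Lean document; each statement's English description precedes it below -/
import Mathlib

section
/- Let b ≥ 0, ρ > 0, R ≥ ρ and T ≥ 0 be real numbers. Define the token-bucket arrival curve α(t) = ρ·t + b and the rate-latency service curve β(t) = R·max(t − T, 0) for t ≥ 0. Then the horizontal deviation sup_{t ≥ 0} inf { d ≥ 0 : α(t) ≤ β(t + d) } equals T + b/R. -/
/-- Horizontal deviation between a token-bucket arrival curve `α(t) = ρ·t + b`
and a rate-latency service curve `β(t) = R·max (t − T) 0` equals `T + b/R`. -/
theorem horizontal_deviation_token_bucket_rate_latency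
    (b ρ R T : ℝ) (hb : 0 ≤ b) (hρ : 0 < ρ) (hR : ρ ≤ R) (hT : 0 ≤ T) :
    sSup ((fun t : ℝ =>
        sInf {d : ℝ | 0 ≤ d ∧ ρ * t + b ≤ R * max ((t + d) - T) 0}) ''
      {t : ℝ | 0 ≤ t}) = T + b / R := by
  have hR0 : 0 < R := lt_of_lt_of_le hρ hR
  have hmem : ∀ t : ℝ, 0 ≤ t →
      T + b / R ∈ {d : ℝ | 0 ≤ d ∧ ρ * t + b ≤ R * max ((t + d) - T) 0} := by
    intro t ht
    refine ⟨by positivity, ?_⟩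
    have h1 : R * (t + (T + b / R) - T) = R * t + b := by
      field_simp
      ring
    have h2 : R * (t + (T + b / R) - T) ≤ R * max (t + (T + b / R) - T) 0 :=
      mul_le_mul_of_nonneg_left (le_max_left _ _) hR0.le
    have h3 : ρ * t ≤ R * t := mul_le_mul_of_nonneg_right hR ht
    linarith
  have hub : ∀ x ∈ ((fun t : ℝ =>
        sInf {d : ℝ | 0 ≤ d ∧ ρ * t + b ≤ R * max ((t + d) - T) 0}) ''
      {t : ℝ | 0 ≤ t}), x ≤ T + b / R := by
    rintro x ⟨t, ht, rfl⟩
    exact csInf_le ⟨0, fun d hd => hd.1⟩ (hmem t ht)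
  apply le_antisymm
  · exact csSup_le ⟨_, 0, le_refl (0 : ℝ), rfl⟩ hub
  · apply le_of_forall_pos_le_add
    intro ε hε
    have h1 : T + b / R - ε ≤
        sInf {d : ℝ | 0 ≤ d ∧ ρ * ε + b ≤ R * max ((ε + d) - T) 0} := by
      apply le_csInf ⟨_, hmem ε hε.le⟩
      rintro d ⟨hd, h⟩
      have hpos : 0 < ρ * ε := mul_pos hρ hε
      rcases le_total ((ε + d) - T) 0 with h0 | h0
      · rw [max_eq_right h0] at h
        linarith
      · rw [max_eq_left h0] at h
        have : b / R ≤ ε + d - T := by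
          rw [div_le_iff₀ hR0]
          linarith
        linarith
    have h2 := le_csSup ⟨_, hub⟩ ⟨ε, hε.le, rfl⟩
    dsimp only at h2
    linarith
end

section
/- Let C > 0 and l > 0 be real numbers, let i ≥ 1 be a natural number, let idSl_1, …, idSl_{i−1} be nonnegative reals with Σ_{j=1}^{i−1} idSl_j < C, and let idSl_i > 0. Let F be a nonempty finite set of flows, where each flow f has burst b_f > 0 and rate ρ_f > 0, and assume idSl_i ≥ Σ_{f∈F} ρ_f. Define the aggregate arrival curve α(t) = (Σ_{f∈F} ρ_f)·t + Σ_{f∈F} b_f and the service curve β(t) = idSl_i·max(t − T, 0) with latency T = (Σ_{j=1}^{i−1} (idSl_j − C)·(l/C) − l)/(Σ_{j=1}^{i−1} idSl_j − C). Then the horizontal deviation sup_{t ≥ 0} inf { d ≥ 0 : α(t) ≤ β(t + d) } equals (Σ_{f∈F} b_f)/idSl_i + l/C + (i−1)·l/(C − Σ_{j=1}^{i−1} idSl_j). -/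
/-- Worst-case delay bound for AVB class `i` at a TSN/ATS+CBS egress port:
the horizontal deviation between the aggregate token-bucket arrival curve and
the CBS rate-latency service curve equals `(Σ b_f)/idSl_i + l/C + (i−1)·l/(C − Σ idSl_j)`. -/
theorem worst_case_delay_bound_TSN_ATS_CBS
    {ι : Type*} (F : Finset ι) (hF : F.Nonempty)
    (b ρ : ι → ℝ) (hb : ∀ f ∈ F, 0 < b f) (hρ : ∀ f ∈ F, 0 < ρ f)
    (C l : ℝ) (hC : 0 < C) (hl : 0 < l)
    (i : ℕ) (hi : 1 ≤ i) (idSl : ℕ → ℝ)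
    (hnn : ∀ j ∈ Finset.Icc 1 (i - 1), 0 ≤ idSl j)
    (hsum : ∑ j ∈ Finset.Icc 1 (i - 1), idSl j < C)
    (hIdi : 0 < idSl i)
    (hstab : ∑ f ∈ F, ρ f ≤ idSl i) :
    sSup ((fun t : ℝ =>
        sInf {d : ℝ | 0 ≤ d ∧
          (∑ f ∈ F, ρ f) * t + ∑ f ∈ F, b f ≤
            idSl i * max ((t + d) -
              (((∑ j ∈ Finset.Icc 1 (i - 1), (idSl j - C) * (l / C)) - l) /
                ((∑ j ∈ Finset.Icc 1 (i - 1), idSl j) - C))) 0}) ''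
      {t : ℝ | 0 ≤ t}) =
      (∑ f ∈ F, b f) / idSl i + l / C +
        ((i : ℝ) - 1) * l / (C - ∑ j ∈ Finset.Icc 1 (i - 1), idSl j) := by
  have hT : ((∑ j ∈ Finset.Icc 1 (i - 1), (idSl j - C) * (l / C)) - l) /
                ((∑ j ∈ Finset.Icc 1 (i - 1), idSl j) - C) =
      l / C + ((i : ℝ) - 1) * l / (C - ∑ j ∈ Finset.Icc 1 (i - 1), idSl j) := by
    rw [← Finset.sum_mul, Finset.sum_sub_distrib, Finset.sum_const, Nat.card_Icc,
      nsmul_eq_mul, Nat.add_sub_cancel, Nat.cast_sub hi]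
    generalize ∑ j ∈ Finset.Icc 1 (i - 1), idSl j = S at *
    have h1 : S - C ≠ 0 := by linarith
    have h2 : C - S ≠ 0 := by linarith
    rw [div_add_div _ _ hC.ne' h2, div_eq_div_iff h1 (mul_ne_zero hC.ne' h2)]
    field_simp
    push_cast
    ring
  rw [hT, add_assoc]
  have hTpos : 0 ≤ l / C + ((i : ℝ) - 1) * l / (C - ∑ j ∈ Finset.Icc 1 (i - 1), idSl j) := by
    have h1 : (0 : ℝ) ≤ (i : ℝ) - 1 := by
      have : (1 : ℝ) ≤ i := by exact_mod_cast hi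
      linarith
    have h2 : 0 < C - ∑ j ∈ Finset.Icc 1 (i - 1), idSl j := by linarith
    positivity
  have hB : 0 < ∑ f ∈ F, b f := Finset.sum_pos hb hF
  clear hT
  generalize l / C + ((i : ℝ) - 1) * l / (C - ∑ j ∈ Finset.Icc 1 (i - 1), idSl j) = T at *
  generalize ∑ f ∈ F, b f = B at *
  generalize ∑ f ∈ F, ρ f = r at *
  generalize idSl i = R at *
  have hBR : 0 < B / R := div_pos hB hIdi
  have hRB : R * (B / R) = B := mul_div_cancel₀ B hIdi.ne'
  apply IsGreatest.csSup_eq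
  constructor
  · refine ⟨0, le_refl (0 : ℝ), ?_⟩
    apply IsLeast.csInf_eq
    constructor
    · refine ⟨by linarith, ?_⟩
      have : (0 + (B / R + T) - T) = B / R := by ring
      rw [this, max_eq_left hBR.le, hRB]
      simp
    · rintro d ⟨hd, h⟩
      rcases le_total (0 + d - T) 0 with h0 | h0
      · rw [max_eq_right h0] at h
        linarith
      · rw [max_eq_left h0] at h
        have : B / R ≤ d - T := by
          rw [div_le_iff₀ hIdi]
          linarith
        linarith
  · rintro _ ⟨t, ht, rfl⟩
    have ht : 0 ≤ t := ht
    apply csInf_le ⟨0, fun d hd => hd.1⟩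
    refine ⟨by linarith, ?_⟩
    have : (t + (B / R + T) - T) = t + B / R := by ring
    rw [this, max_eq_left (by linarith), mul_add, hRB]
    have := mul_le_mul_of_nonneg_right hstab ht
    linarith
end

section
/- Let A, m, B, d be positive real numbers and S ≥ 0 a real number. Define η = 1 + A·B/(m·d), ξ = −η·S − (η − 1)·A − d, ζ = (η − 1)·A·S, and f(x) = η·x² + ξ·x + ζ. Set x* = (−ξ − √(ξ² − 4·η·ζ)) / (2·η). Then f(x*) = 0, 0 ≤ x* ≤ S, and x* is the unique root of f in the interval [0, S]: every y ∈ [0, S] with f(y) = 0 satisfies y = x*. Moreover, if S > 0 then 0 < x* < S. -/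
/-- Lemma 1: the smaller root `x* = (−ξ − √(ξ² − 4ηζ))/(2η)` is the unique root
of `f(x) = η·x² + ξ·x + ζ` in `[0, S]`, and lies strictly inside when `S > 0`. -/
theorem lemma1_unique_feasible_root
    (A m B d S η ξ ζ xstar : ℝ)
    (hA : 0 < A) (hm : 0 < m) (hB : 0 < B) (hd : 0 < d) (hS : 0 ≤ S)
    (hη : η = 1 + A * B / (m * d))
    (hξ : ξ = -η * S - (η - 1) * A - d)
    (hζ : ζ = (η - 1) * A * S)
    (hx : xstar = (-ξ - Real.sqrt (ξ ^ 2 - 4 * η * ζ)) / (2 * η)) :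
    (η * xstar ^ 2 + ξ * xstar + ζ = 0) ∧
    (0 ≤ xstar ∧ xstar ≤ S) ∧
    (∀ y : ℝ, 0 ≤ y → y ≤ S → η * y ^ 2 + ξ * y + ζ = 0 → y = xstar) ∧
    (0 < S → 0 < xstar ∧ xstar < S) := by
  have hη1 : 0 < η - 1 := by
    have : 0 < A * B / (m * d) := by positivity
    linarith
  have hη0 : 0 < η := by linarith
  obtain ⟨p, hp⟩ : ∃ p, p = (η - 1) * A := ⟨_, rfl⟩
  have hp0 : 0 < p := by rw [hp]; positivity
  rw [← hp] at hξ hζ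
  have hηS : 0 ≤ η * S := by positivity
  have hdisc : 0 < ξ ^ 2 - 4 * η * ζ := by
    have e : ξ ^ 2 - 4 * η * ζ = (η * S - p) ^ 2 + d ^ 2 + 2 * d * (η * S + p) := by
      rw [hξ, hζ]; ring
    rw [e]; positivity
  obtain ⟨s, hs⟩ : ∃ s, s = Real.sqrt (ξ ^ 2 - 4 * η * ζ) := ⟨_, rfl⟩
  have hs0 : 0 < s := by rw [hs]; exact Real.sqrt_pos.mpr hdisc
  have hs2 : s ^ 2 = ξ ^ 2 - 4 * η * ζ := by rw [hs]; exact Real.sq_sqrt hdisc.le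
  rw [← hs] at hx
  have hxe : 2 * η * xstar = -ξ - s := by rw [hx]; field_simp
  have hroot : η * xstar ^ 2 + ξ * xstar + ζ = 0 := by
    have h : 4 * η * (η * xstar ^ 2 + ξ * xstar + ζ) = 0 := by
      have : 4 * η * (η * xstar ^ 2 + ξ * xstar + ζ)
          = (2 * η * xstar + ξ) ^ 2 - (ξ ^ 2 - 4 * η * ζ) := by ring
      rw [this, hxe, ← hs2]; ring
    rcases mul_eq_zero.mp h with h | h
    · linarith
    · exact h
  have e1 : s ^ 2 = (p + d - η * S) ^ 2 + 4 * d * (η * S) := by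
    rw [hs2, hξ, hζ]; ring
  have e2 : s ^ 2 = (η * S + p + d) ^ 2 - 4 * p * (η * S) := by
    rw [hs2, hξ, hζ]; ring
  have hdS : 0 ≤ 4 * d * (η * S) := by positivity
  have hpS : 0 ≤ 4 * p * (η * S) := by positivity
  have hlo : 0 < S → 0 < xstar ∧ xstar < S := by
    intro hS'
    have h1 : 0 < 4 * d * (η * S) := by positivity
    have h2 : 0 < 4 * p * (η * S) := by positivity
    have a1 : p + d - η * S < s := lt_of_pow_lt_pow_left₀ 2 hs0.le (by linarith)
    have a2 : s < η * S + p + d := lt_of_pow_lt_pow_left₀ 2 (by positivity) (by linarith)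
    constructor
    · have : 0 < 2 * η * xstar := by rw [hxe, hξ]; linarith
      exact pos_of_mul_pos_right this (by positivity)
    · have : 2 * η * xstar < 2 * η * S := by rw [hxe, hξ]; linarith
      exact lt_of_mul_lt_mul_left this (by positivity)
  have hle : 0 ≤ xstar ∧ xstar ≤ S := by
    have a1 : p + d - η * S ≤ s := le_of_abs_le <| abs_le_of_sq_le_sq (by linarith) hs0.le
    have a2 : s ≤ η * S + p + d := le_of_abs_le <| abs_le_of_sq_le_sq (by linarith) (by positivity)
    constructor
    · have : 2 * η * 0 ≤ 2 * η * xstar := by rw [hxe, hξ]; linarith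
      exact le_of_mul_le_mul_left this (by positivity)
    · have : 2 * η * xstar ≤ 2 * η * S := by rw [hxe, hξ]; linarith
      exact le_of_mul_le_mul_left this (by positivity)
  refine ⟨hroot, hle, ?_, hlo⟩
  intro y hy0 hyS hy
  have hsq : (2 * η * y + ξ) ^ 2 = s ^ 2 := by
    rw [hs2]; linear_combination 4 * η * hy
  rcases sq_eq_sq_iff_eq_or_eq_neg.mp hsq with h | h
  · exfalso
    have hyS' : η * y ≤ η * S := mul_le_mul_of_nonneg_left hyS hη0.le
    have hb : s ≤ η * S - p - d := by linarith
    have hb2 : s ^ 2 ≤ (η * S - p - d) ^ 2 := pow_le_pow_left₀ hs0.le hb 2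
    have hpos : 0 < η * S := by linarith
    have : 0 < 4 * d * (η * S) := by positivity
    nlinarith
  · have : 2 * η * y = 2 * η * xstar := by linarith
    exact mul_left_cancel₀ (by positivity) this
end

section
/- Let A, m, B, d be positive real numbers and S ≥ 0 a real number. Define η = 1 + A·B/(m·d), ξ = −η·S − (η − 1)·A − d, and ζ = (η − 1)·A·S. Then the larger root of the quadratic η·x² + ξ·x + ζ, namely (−ξ + √(ξ² − 4·η·ζ)) / (2·η), is greater than or equal to S; if S > 0 it is strictly greater than S. -/
/-- The larger root of the quadratic from Lemma 1 lies at or beyond `S`,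
and strictly beyond when `S > 0`. -/
theorem quadratic_larger_root_beyond_S
    (A m B d S η ξ ζ : ℝ)
    (hA : 0 < A) (hm : 0 < m) (hB : 0 < B) (hd : 0 < d) (hS : 0 ≤ S)
    (hη : η = 1 + A * B / (m * d))
    (hξ : ξ = -η * S - (η - 1) * A - d)
    (hζ : ζ = (η - 1) * A * S) :
    S ≤ (-ξ + Real.sqrt (ξ ^ 2 - 4 * η * ζ)) / (2 * η) ∧
    (0 < S → S < (-ξ + Real.sqrt (ξ ^ 2 - 4 * η * ζ)) / (2 * η)) := by
  have hpos : 0 < η := by rw [hη]; positivity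
  have key : (2 * η * S + ξ) ^ 2 = (ξ ^ 2 - 4 * η * ζ) - 4 * (η * d * S) := by
    rw [hξ, hζ]; ring
  constructor
  · rw [le_div_iff₀ (by positivity)]
    have h0 : 0 ≤ η * d * S := by positivity
    have := Real.le_sqrt_of_sq_le (x := 2 * η * S + ξ) (y := ξ ^ 2 - 4 * η * ζ) (by linarith)
    linarith
  · intro hS0
    rw [lt_div_iff₀ (by positivity)]
    have h0 : 0 < η * d * S := by positivity
    have := Real.lt_sqrt_of_sq_lt (x := 2 * η * S + ξ) (y := ξ ^ 2 - 4 * η * ζ) (by linarith)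
    linarith
end

section
/- Let A, m, B, d be positive real numbers and S a real number with 0 ≤ S < A. Define η = 1 + A·B/(m·d), ξ = −η·S − (η − 1)·A − d, ζ = (η − 1)·A·S, and x* = (−ξ − √(ξ² − 4·η·ζ)) / (2·η). Then 0 ≤ x* ≤ S < A, Q(x*) := B/d + m/A − m/(A − x*) > 0, and B/(d + S − x*) + m/(A − x*) = B/d + m/A. -/
/-- Correctness of one recursion step of Theorem 1: giving extra bandwidth `x*`
to the higher-priority classes and `S − x*` to class `j` exactly preserves
class `j`'s local deadline `B/d + m/A` (up to the common constant `l/C`). -/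
theorem theorem1_recursion_step_preserves_deadline
    (A m B d S η ξ ζ xstar : ℝ)
    (hA : 0 < A) (hm : 0 < m) (hB : 0 < B) (hd : 0 < d)
    (hS0 : 0 ≤ S) (hSA : S < A)
    (hη : η = 1 + A * B / (m * d))
    (hξ : ξ = -η * S - (η - 1) * A - d)
    (hζ : ζ = (η - 1) * A * S)
    (hx : xstar = (-ξ - Real.sqrt (ξ ^ 2 - 4 * η * ζ)) / (2 * η)) :
    (0 ≤ xstar ∧ xstar ≤ S ∧ S < A) ∧
    0 < B / d + m / A - m / (A - xstar) ∧
    B / (d + S - xstar) + m / (A - xstar) = B / d + m / A := by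
  obtain ⟨k, hk⟩ : ∃ k, k = A * B / (m * d) := ⟨_, rfl⟩
  have hk0 : 0 < k := by rw [hk]; positivity
  have hBk : B = k * m * d / A := by rw [hk]; field_simp
  rw [← hk] at hη
  have hη0 : 0 < η := by linarith
  have hk1 : η - 1 = k := by linarith
  rw [hk1] at hξ hζ
  have hηS : 0 ≤ η * S := by positivity
  have hkA : 0 < k * A := by positivity
  have hζ0 : 0 ≤ ζ := by rw [hζ]; positivity
  have hD : 0 ≤ ξ ^ 2 - 4 * η * ζ := by
    have : ξ ^ 2 - 4 * η * ζ = (η * S - k * A) ^ 2 + d ^ 2 + 2 * d * (η * S + k * A) := by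
      rw [hξ, hζ]; ring
    rw [this]; positivity
  have hs := Real.sq_sqrt hD
  have hs1 : Real.sqrt (ξ ^ 2 - 4 * η * ζ) ≤ -ξ := by
    apply Real.sqrt_le_iff.mpr
    constructor
    · rw [hξ]; linarith
    · have : 0 ≤ η * ζ := by positivity
      nlinarith
  have hs2 : -ξ - 2 * η * S ≤ Real.sqrt (ξ ^ 2 - 4 * η * ζ) := by
    apply Real.le_sqrt_of_sq_le
    have : ξ ^ 2 - 4 * η * ζ - (-ξ - 2 * η * S) ^ 2 = 4 * η * (d * S) := by
      rw [hξ, hζ]; ring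
    have : 0 ≤ 4 * η * (d * S) := by positivity
    linarith
  generalize Real.sqrt (ξ ^ 2 - 4 * η * ζ) = s at *
  have hsx : s = -ξ - 2 * η * xstar := by rw [hx]; field_simp; ring
  have hx0 : 0 ≤ xstar := by rw [hx]; apply div_nonneg <;> linarith
  have hxS : xstar ≤ S := by
    rw [hx, div_le_iff₀ (by positivity)]; linarith
  have hq : η * xstar ^ 2 + ξ * xstar + ζ = 0 := by
    rw [hsx] at hs
    have : 4 * η * (η * xstar ^ 2 + ξ * xstar + ζ) = 0 := by linarith
    exact (mul_eq_zero.mp this).resolve_left (by positivity)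
  have h1 : 0 < d + S - xstar := by linarith
  have h2 : 0 < A - xstar := by linarith
  have hE : B / (d + S - xstar) + m / (A - xstar) = B / d + m / A := by
    rw [hξ, hζ, hη] at hq
    rw [hBk]
    field_simp
    linear_combination -hq
  refine ⟨⟨hx0, hxS, hSA⟩, ?_, hE⟩
  have : 0 < B / (d + S - xstar) := by positivity
  linarith
end

section
/- Let N ≥ 1 be a natural number and, for each n ∈ {1, …, N}, let A_n, m_n, B_n, d_n be positive real numbers. Let S₀ ≥ 0. Define a sequence σ_N, σ_{N−1}, …, σ_0 by σ_N = S₀ and, for n = N down to 1, σ_{n−1} = (−ξ_n − √(ξ_n² − 4·η_n·ζ_n)) / (2·η_n), where η_n = 1 + A_n·B_n/(m_n·d_n), ξ_n = −η_n·σ_n − (η_n − 1)·A_n − d_n, and ζ_n = (η_n − 1)·A_n·σ_n. Then the sequence is well defined and satisfies 0 ≤ σ_0 ≤ σ_1 ≤ … ≤ σ_N = S₀; consequently the extra bandwidths Φ_n := σ_n − σ_{n−1} for n = 1, …, N together with Φ_0 := σ_0 are all nonnegative and satisfy Φ_0 + Σ_{n=1}^{N} Φ_n = S₀. -/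
lemma step_aux (e a s d : ℝ) (he : 1 < e) (ha : 0 < a) (hs : 0 ≤ s) (hd : 0 < d) :
    0 ≤ (-(-e * s - (e - 1) * a - d) -
      Real.sqrt ((-e * s - (e - 1) * a - d) ^ 2 - 4 * e * ((e - 1) * a * s))) / (2 * e) ∧
    (-(-e * s - (e - 1) * a - d) -
      Real.sqrt ((-e * s - (e - 1) * a - d) ^ 2 - 4 * e * ((e - 1) * a * s))) / (2 * e) ≤ s := by
  have he0 : 0 < e := by linarith
  have h1 : 0 < e - 1 := by linarith
  have hes : 0 ≤ e * s := by positivity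
  have hea : 0 < (e - 1) * a := by positivity
  have hz : 0 ≤ 4 * e * ((e - 1) * a * s) := by positivity
  have hk : 0 ≤ e * s * d := by positivity
  constructor
  · apply div_nonneg _ (by positivity)
    have : Real.sqrt ((-e * s - (e - 1) * a - d) ^ 2 - 4 * e * ((e - 1) * a * s)) ≤
        -(-e * s - (e - 1) * a - d) := by
      apply Real.sqrt_le_iff.2
      constructor
      · linarith
      · rw [neg_sq]; linarith
    linarith
  · rw [div_le_iff₀ (by positivity)]
    have : -(-e * s - (e - 1) * a - d) - 2 * (e * s) ≤
        Real.sqrt ((-e * s - (e - 1) * a - d) ^ 2 - 4 * e * ((e - 1) * a * s)) := by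
      apply Real.le_sqrt_of_sq_le
      nlinarith
    linarith

/-- Well-definedness of the recursion in Theorem 1: the sequence
`σ_N = S₀`, `σ_{n−1} = (−ξ_n − √(ξ_n² − 4η_nζ_n))/(2η_n)` is monotone,
`0 ≤ σ_0 ≤ … ≤ σ_N = S₀`, so the extra bandwidths `Φ_n = σ_n − σ_{n−1}` and
`Φ_0 = σ_0` are nonnegative and sum to `S₀`. -/
theorem theorem1_recursion_well_defined
    (N : ℕ) (hN : 1 ≤ N)
    (A m B d : ℕ → ℝ)
    (hA : ∀ n, 1 ≤ n → n ≤ N → 0 < A n)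
    (hm : ∀ n, 1 ≤ n → n ≤ N → 0 < m n)
    (hB : ∀ n, 1 ≤ n → n ≤ N → 0 < B n)
    (hd : ∀ n, 1 ≤ n → n ≤ N → 0 < d n)
    (S₀ : ℝ) (hS₀ : 0 ≤ S₀)
    (σ : ℕ → ℝ) (hσN : σ N = S₀)
    (hrec : ∀ n, 1 ≤ n → n ≤ N →
      σ (n - 1) =
        (-(-(1 + A n * B n / (m n * d n)) * σ n -
            ((1 + A n * B n / (m n * d n)) - 1) * A n - d n) -
          Real.sqrt ((-(1 + A n * B n / (m n * d n)) * σ n -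
              ((1 + A n * B n / (m n * d n)) - 1) * A n - d n) ^ 2 -
            4 * (1 + A n * B n / (m n * d n)) *
              (((1 + A n * B n / (m n * d n)) - 1) * A n * σ n))) /
          (2 * (1 + A n * B n / (m n * d n)))) :
    0 ≤ σ 0 ∧
    (∀ n, 1 ≤ n → n ≤ N → σ (n - 1) ≤ σ n) ∧
    (∀ n, 1 ≤ n → n ≤ N → 0 ≤ σ n - σ (n - 1)) ∧
    σ 0 + ∑ n ∈ Finset.Icc 1 N, (σ n - σ (n - 1)) = S₀ := by
  have step : ∀ n, 1 ≤ n → n ≤ N → 0 ≤ σ n → 0 ≤ σ (n - 1) ∧ σ (n - 1) ≤ σ n := by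
    intro n h1 h2 hs
    have a := hA n h1 h2
    have b := hB n h1 h2
    have c := hm n h1 h2
    have d' := hd n h1 h2
    have hp : 0 < A n * B n / (m n * d n) := by positivity
    rw [hrec n h1 h2]
    exact step_aux _ _ _ _ (by linarith) a hs d'
  have nn : ∀ k, k ≤ N → 0 ≤ σ (N - k) := by
    intro k
    induction k with
    | zero => intro _; simpa [hσN] using hS₀
    | succ k ih =>
      intro hk
      exact (step (N - k) (by omega) (by omega) (ih (by omega))).1
  have nn' : ∀ n, n ≤ N → 0 ≤ σ n := by
    intro n hn
    have := nn (N - n) (by omega)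
    rwa [Nat.sub_sub_self hn] at this
  have mono : ∀ n, 1 ≤ n → n ≤ N → σ (n - 1) ≤ σ n :=
    fun n h1 h2 => (step n h1 h2 (nn' n h2)).2
  have tel : ∀ M : ℕ, σ 0 + ∑ n ∈ Finset.Icc 1 M, (σ n - σ (n - 1)) = σ M := by
    intro M
    induction M with
    | zero => simp
    | succ M ih =>
      rw [Finset.sum_Icc_succ_top (by omega), Nat.add_sub_cancel]
      linarith
  exact ⟨nn' 0 (by omega), mono, fun n h1 h2 => sub_nonneg.2 (mono n h1 h2),
    (tel N).trans hσN⟩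
end
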